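/- Suppose α satisfies either: (i) 0 ≤ α with α⁴ − 4(1−√2)α³ − 12(3−√2)α² − 12(6−√2)α − 48 < 0 and 6α⁵ + (23+3√2)α⁴ + (13+19√2)α³ − (77−38√2)α² − (157−24√2)α − 96 < 0, or (ii) −1 < α < 0 with −(2+7√3)α⁴ + 2(15+√2−11√3+√6)α³ + 2(57+3√2−10√3+3√6)α² + 6(20+√2+√6)α + 24 > 0. Then there exists c > 0 such that for every u ∈ C_0^∞(ℝ³;ℝ³) and every y ∈ ℝ³, ∫_{ℝ³}(Lu(x))·(Φ(x−y)u(x)) dx ≥ (1/2)|u(y)|² + c ∫_{ℝ³}|Du(x)|² |x−y|^{−1} dx, where Du is the Jacobian matrix of u. -/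

import Mathlib

/-!
Write `r = |x-y|`, `w = (x-y)/r`, `a = α/(α+2)`, `d = div u`. The energy is reduced to
`½|u(y)|²` plus the integral of `c_α/r` times a quadratic form in `Du` alone, which is positive
pointwise.

The entries of `Φ` are combinations of `1/r` and `xᵢxⱼ/r³ = δᵢⱼ/r - ∂ᵢ∂ⱼr`. Distributionally
`Δr = 2/r` and `Δ(1/r) = -4πδ` (`integral_pd_pd_mul_norm`, `integral_lap_mul_norm`,
`integral_lap_mul_inv`, all obtained by letting `ε → 0` in `√(r²+ε²)`). Pulling complete
derivatives out of `(Lu)·Φu` leaves the form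
`|Du|² + αd² + a|wᵀDu|² + αa d (wᵀDu w)` together with derivatives of `uᵢuⱼ` and `d uⱼ` tested
against these kernels (`density_eq`). The identity
`∑ ∂ᵢ∂ⱼ(uᵢuⱼ) = 2 div(d u) - (d² - tr (Du)²)` shows that the latter contribute exactly
`½|u(y)|²/c_α`, provided `-a(d² - tr (Du)²)` is included in the form; the coefficient
`2a - α + αa` of the remaining integral vanishes by the choice of `a`. This is `energy_identity`.

The resulting form `|Du|² + a((α+1)d² + αd(wᵀDu w) + |wᵀDu|² + tr (Du)²)` dominates `|Du|²/8` for
`-1/4 ≤ α ≤ 2` (`qform_coercive`), and the polynomial hypotheses force `α` into this range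
(`alpha_range`).
-/

open MeasureTheory Metric Real Filter

noncomputable section

/-- `ℝ³` as Euclidean space. -/
abbrev E3 : Type := EuclideanSpace ℝ (Fin 3)

/-- Partial derivative `∂ᵢ f` on `ℝ³`. -/
def pd (i : Fin 3) (f : E3 → ℝ) (x : E3) : ℝ :=
  fderiv ℝ f x (EuclideanSpace.single i 1)

/-- Laplacian on `ℝ³`. -/
def lap (f : E3 → ℝ) (x : E3) : ℝ := ∑ i, pd i (pd i f) x

/-- Divergence of a vector field on `ℝ³`. -/
def divg (u : E3 → Fin 3 → ℝ) (x : E3) : ℝ := ∑ k, pd k (fun y => u y k) x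

/-- The 3D Lamé operator `(Lu)ᵢ = -Δuᵢ - α ∂ᵢ (div u)`. -/
def lame (α : ℝ) (u : E3 → Fin 3 → ℝ) (x : E3) (i : Fin 3) : ℝ :=
  - lap (fun y => u y i) x - α * pd i (divg u) x

/-- The constant `c_α = (α+2)/(8π(α+1))`. -/
def cA (α : ℝ) : ℝ := (α + 2) / (8 * Real.pi * (α + 1))

/-- The fundamental matrix `Φ` of the 3D Lamé system:
`Φ_ij(x) = c_α |x|⁻¹ (δ_ij + (α/(α+2)) xᵢxⱼ/|x|²)`. -/
def Phi (α : ℝ) (x : E3) (i j : Fin 3) : ℝ :=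
  cA α * ‖x‖⁻¹ * ((if i = j then (1 : ℝ) else 0) + (α / (α + 2)) * (x i * x j) / ‖x‖ ^ 2)

/-- `u ∈ C₀^∞(U; ℝ³)`: smooth, compactly supported, with support inside `U`. -/
def IsTestOn (U : Set E3) (u : E3 → Fin 3 → ℝ) : Prop :=
  ContDiff ℝ (⊤ : ℕ∞) u ∧ HasCompactSupport u ∧ tsupport u ⊆ U

/-- `∫_{ℝ³} (Lu)·(Φ(·-y) u) dx`. -/
def lameEnergy (α : ℝ) (u : E3 → Fin 3 → ℝ) (y : E3) : ℝ :=
  ∫ x : E3, ∑ i, ∑ j, lame α u x i * Phi α (x - y) i j * u x j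

/-! ### Calculus of test functions -/

/-- Smooth compactly supported scalar functions on `ℝ³`. -/
def IsTest (f : E3 → ℝ) : Prop := ContDiff ℝ (⊤ : ℕ∞) f ∧ HasCompactSupport f

lemma ContDiff.pd_smooth {f : E3 → ℝ} (hf : ContDiff ℝ (⊤ : ℕ∞) f) (i : Fin 3) :
    ContDiff ℝ (⊤ : ℕ∞) (pd i f) := by
  unfold pd
  exact (hf.fderiv_right (m := (⊤ : ℕ∞)) (by simp)).clm_apply contDiff_const

lemma ContDiff.diffAt {f : E3 → ℝ} (hf : ContDiff ℝ (⊤ : ℕ∞) f) (x : E3) :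
    DifferentiableAt ℝ f x := hf.differentiable (by simp) x

namespace IsTest

variable {f g : E3 → ℝ}

lemma pd (hf : IsTest f) (i : Fin 3) : IsTest (pd i f) :=
  ⟨hf.1.pd_smooth i, hf.2.fderiv_apply ℝ _⟩

lemma mul (hf : IsTest f) (hg : IsTest g) : IsTest (fun x => f x * g x) :=
  ⟨hf.1.mul hg.1, hf.2.mul_right⟩

lemma mul_smooth (hf : IsTest f) (hg : ContDiff ℝ (⊤ : ℕ∞) g) : IsTest (fun x => f x * g x) :=
  ⟨hf.1.mul hg, hf.2.mul_right⟩

lemma add (hf : IsTest f) (hg : IsTest g) : IsTest (fun x => f x + g x) :=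
  ⟨hf.1.add hg.1, hf.2.add hg.2⟩

lemma const_mul (c : ℝ) (hf : IsTest f) : IsTest (fun x => c * f x) :=
  ⟨contDiff_const.mul hf.1, hf.2.mul_left⟩

lemma sub (hf : IsTest f) (hg : IsTest g) : IsTest (fun x => f x - g x) := by
  simpa [sub_eq_add_neg] using hf.add (hg.const_mul (-1))

lemma sum {F : Fin 3 → E3 → ℝ} (hF : ∀ i, IsTest (F i)) : IsTest (fun x => ∑ i, F i x) := by
  simp only [Fin.sum_univ_three]
  exact ((hF 0).add (hF 1)).add (hF 2)

lemma lap (hf : IsTest f) : IsTest (lap f) :=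
  IsTest.sum fun i => (hf.pd i).pd i

lemma integrable (hf : IsTest f) : Integrable f :=
  hf.1.continuous.integrable_of_hasCompactSupport hf.2

lemma translate (hf : IsTest f) (y : E3) : IsTest (fun x => f (x + y)) :=
  ⟨hf.1.comp (contDiff_id.add contDiff_const),
    hf.2.comp_homeomorph (Homeomorph.addRight y)⟩

end IsTest

lemma pd_mul {f g : E3 → ℝ} (hf : ContDiff ℝ (⊤ : ℕ∞) f) (hg : ContDiff ℝ (⊤ : ℕ∞) g)
    (i : Fin 3) (x : E3) : pd i (fun y => f y * g y) x = pd i f x * g x + f x * pd i g x := by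
  unfold pd
  rw [fderiv_fun_mul (hf.diffAt x) (hg.diffAt x)]
  simp
  ring

lemma pd_add {f g : E3 → ℝ} (hf : ContDiff ℝ (⊤ : ℕ∞) f) (hg : ContDiff ℝ (⊤ : ℕ∞) g)
    (i : Fin 3) (x : E3) : pd i (fun y => f y + g y) x = pd i f x + pd i g x := by
  unfold pd
  rw [fderiv_fun_add (hf.diffAt x) (hg.diffAt x)]
  simp

lemma pd_sum {F : Fin 3 → E3 → ℝ} (hF : ∀ k, ContDiff ℝ (⊤ : ℕ∞) (F k))
    (i : Fin 3) (x : E3) : pd i (fun y => ∑ k, F k y) x = ∑ k, pd i (F k) x := by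
  unfold pd
  rw [fderiv_fun_sum fun k _ => (hF k).diffAt x]
  simp

lemma pd_comm {f : E3 → ℝ} (hf : ContDiff ℝ (⊤ : ℕ∞) f) (i j : Fin 3) :
    pd i (pd j f) = pd j (pd i f) := by
  funext x
  have hd : DifferentiableAt ℝ (fderiv ℝ f) x :=
    (hf.fderiv_right (m := (⊤ : ℕ∞)) (by simp)).differentiable (by simp) x
  have key : ∀ v w : E3, fderiv ℝ (fun y => fderiv ℝ f y v) x w = fderiv ℝ (fderiv ℝ f) x w v := by
    intro v w
    rw [fderiv_clm_apply hd (differentiableAt_const v)]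
    simp
  have hs : IsSymmSndFDerivAt ℝ f x :=
    hf.contDiffAt.isSymmSndFDerivAt (by
      rw [minSmoothness_of_isRCLikeNormedField]; exact WithTop.coe_le_coe.mpr (le_top : (2 : ℕ∞) ≤ ⊤))
  change fderiv ℝ (fun y => fderiv ℝ f y _) x _ = fderiv ℝ (fun y => fderiv ℝ f y _) x _
  rw [key, key]
  exact hs _ _

lemma pd_lap {f : E3 → ℝ} (hf : ContDiff ℝ (⊤ : ℕ∞) f) (i : Fin 3) :
    pd i (lap f) = lap (pd i f) := by
  funext x
  unfold lap
  rw [pd_sum fun k => (hf.pd_smooth k).pd_smooth k]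
  refine Finset.sum_congr rfl fun k _ => ?_
  rw [pd_comm (hf.pd_smooth k) i k, pd_comm hf i k]

lemma pd_translate (f : E3 → ℝ) (y : E3) (i : Fin 3) :
    pd i (fun x => f (x + y)) = fun x => pd i f (x + y) := by
  funext x
  unfold pd
  rw [fderiv_comp_add_right]

lemma lap_translate (f : E3 → ℝ) (y : E3) :
    lap (fun x => f (x + y)) = fun x => lap f (x + y) := by
  funext x
  simp only [lap, pd_translate]

/-- Integration by parts of a test function against a smooth function. -/
lemma integral_pd_mul {f g : E3 → ℝ} (hf : IsTest f) (hg : ContDiff ℝ (⊤ : ℕ∞) g) (i : Fin 3) :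
    ∫ x, pd i f x * g x = - ∫ x, f x * pd i g x := by
  have h := integral_mul_fderiv_eq_neg_fderiv_mul_of_integrable (μ := (volume : Measure E3))
    (f := f) (g := g) (v := EuclideanSpace.single i 1)
    ((hf.pd i).mul_smooth hg).integrable (hf.mul_smooth (hg.pd_smooth i)).integrable
    (hf.mul_smooth hg).integrable (fun x _ => hf.1.diffAt x) (fun x _ => hg.diffAt x)
  change ∫ x, pd i f x * g x = - ∫ x, f x * fderiv ℝ g x _
  rw [h, neg_neg]
  rfl

/-! ### The regularized distance -/

/-- The smooth approximation `√(|x|² + ε²)` of `|x|`. -/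
def rho (ε : ℝ) (x : E3) : ℝ := √(‖x‖ ^ 2 + ε ^ 2)

section rho

variable {ε : ℝ}

lemma rho_pos (hε : 0 < ε) (x : E3) : 0 < rho ε x := by
  unfold rho; positivity

lemma rho_sq (ε : ℝ) (x : E3) : rho ε x ^ 2 = ‖x‖ ^ 2 + ε ^ 2 := by
  unfold rho; rw [Real.sq_sqrt]; positivity

lemma norm_le_rho (ε : ℝ) (x : E3) : ‖x‖ ≤ rho ε x := by
  apply Real.le_sqrt_of_sq_le; nlinarith [sq_nonneg ε]

lemma rho_le (hε : 0 < ε) (x : E3) : rho ε x ≤ ‖x‖ + ε := by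
  unfold rho
  rw [Real.sqrt_le_left (by positivity)]
  nlinarith [norm_nonneg x]

lemma contDiff_rho (hε : 0 < ε) : ContDiff ℝ (⊤ : ℕ∞) (rho ε) := by
  unfold rho
  exact ((contDiff_norm_sq ℝ).add contDiff_const).sqrt fun x => by positivity

lemma contDiff_rho_inv (hε : 0 < ε) : ContDiff ℝ (⊤ : ℕ∞) (fun x => (rho ε x)⁻¹) :=
  (contDiff_rho hε).inv fun x => (rho_pos hε x).ne'

lemma contDiff_coord (i : Fin 3) : ContDiff ℝ (⊤ : ℕ∞) (fun x : E3 => x i) :=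
  (EuclideanSpace.proj i : E3 →L[ℝ] ℝ).contDiff

lemma pd_coord (i j : Fin 3) (x : E3) :
    pd i (fun x : E3 => x j) x = if i = j then 1 else 0 := by
  unfold pd
  have : fderiv ℝ (fun x : E3 => x j) x = (EuclideanSpace.proj j : E3 →L[ℝ] ℝ) :=
    (EuclideanSpace.proj j : E3 →L[ℝ] ℝ).fderiv
  rw [this]
  simp [eq_comm]

lemma pd_rho (hε : 0 < ε) (i : Fin 3) (x : E3) : pd i (rho ε) x = x i * (rho ε x)⁻¹ := by
  have h1 : HasFDerivAt (fun x : E3 => ‖x‖ ^ 2 + ε ^ 2) (2 • innerSL ℝ x) x :=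
    (hasStrictFDerivAt_norm_sq x).hasFDerivAt.add_const _
  have h2 := h1.sqrt (by positivity)
  unfold pd
  have : fderiv ℝ (rho ε) x = _ := h2.fderiv
  rw [this]
  simp [rho, EuclideanSpace.inner_single_right]
  field_simp

lemma pd_rho_inv (hε : 0 < ε) (i : Fin 3) (x : E3) :
    pd i (fun x => (rho ε x)⁻¹) x = - (x i * (rho ε x)⁻¹ ^ 3) := by
  have h := pd_mul (contDiff_rho hε) (contDiff_rho_inv hε) i x
  have h1 : (fun y => rho ε y * (rho ε y)⁻¹) = fun _ => 1 := by
    funext y; exact mul_inv_cancel₀ (rho_pos hε y).ne'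
  have h0 : pd i (fun _ : E3 => (1 : ℝ)) x = 0 := by simp [pd]
  rw [h1, h0, pd_rho hε] at h
  have := (rho_pos hε x).ne'
  field_simp at h ⊢
  linarith

lemma pd_rho_inv_cube (hε : 0 < ε) (i : Fin 3) (x : E3) :
    pd i (fun x => (rho ε x)⁻¹ ^ 3) x = - (3 * x i * (rho ε x)⁻¹ ^ 5) := by
  have hs := contDiff_rho_inv hε
  have e : (fun x => (rho ε x)⁻¹ ^ 3) = fun x => (rho ε x)⁻¹ * ((rho ε x)⁻¹ * (rho ε x)⁻¹) := by
    funext y; ring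
  rw [e, pd_mul hs (hs.mul hs), pd_mul hs hs, pd_rho_inv hε]
  ring

lemma pd_pd_rho (hε : 0 < ε) (i j : Fin 3) (x : E3) :
    pd i (pd j (rho ε)) x =
      (if i = j then 1 else 0) * (rho ε x)⁻¹ - x i * x j * (rho ε x)⁻¹ ^ 3 := by
  have e : pd j (rho ε) = fun x => x j * (rho ε x)⁻¹ := funext (pd_rho hε j)
  rw [e, pd_mul (contDiff_coord j) (contDiff_rho_inv hε), pd_coord, pd_rho_inv hε]
  ring

lemma lap_rho_inv (hε : 0 < ε) (x : E3) :
    lap (fun x => (rho ε x)⁻¹) x = - (3 * ε ^ 2 * (rho ε x)⁻¹ ^ 5) := by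
  have e : ∀ j, pd j (fun x => (rho ε x)⁻¹) = fun x => x j * ((-1) * (rho ε x)⁻¹ ^ 3) := by
    intro j; funext y; rw [pd_rho_inv hε]; ring
  have hc : ∀ c : ℝ, ContDiff ℝ (⊤ : ℕ∞) (fun x => c * (rho ε x)⁻¹ ^ 3) := fun c =>
    contDiff_const.mul ((contDiff_rho_inv hε).pow 3)
  have hk : ∀ j, pd j (fun x => (-1) * (rho ε x)⁻¹ ^ 3) x = 3 * x j * (rho ε x)⁻¹ ^ 5 := by
    intro j
    rw [pd_mul contDiff_const ((contDiff_rho_inv hε).pow 3), pd_rho_inv_cube hε]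
    simp [pd]
  have hn : ‖x‖ ^ 2 = x 0 ^ 2 + x 1 ^ 2 + x 2 ^ 2 := by
    rw [EuclideanSpace.real_norm_sq_eq, Fin.sum_univ_three]
  have hr := rho_sq ε x
  have hp := (rho_pos hε x).ne'
  unfold lap
  simp only [e, pd_mul (contDiff_coord _) (hc _), pd_coord, hk, Fin.sum_univ_three]
  simp only [if_true]
  have : (rho ε x)⁻¹ ^ 3 = (x 0 ^ 2 + x 1 ^ 2 + x 2 ^ 2 + ε ^ 2) * (rho ε x)⁻¹ ^ 5 := by
    rw [← hn, ← hr]; field_simp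
  rw [this]; ring

end rho

/-! ### Singular weights of order `|x|⁻¹` -/

/-- A test function times a kernel of order `|x|⁻¹` is integrable on `ℝ³`. -/
lemma IsTest.integrable_mul_kernel {f K : E3 → ℝ} (hf : IsTest f) (hK : Measurable K) {C : ℝ}
    (hC : ∀ x, |K x| ≤ C * ‖x‖⁻¹) : Integrable (fun x => f x * K x) := by
  have hl : LocallyIntegrable K (volume : Measure E3) := by
    refine locallyIntegrable_of_norm_le_rpow (C := C) (α := 1) (by simp) (by simp) ?_
      hK.aestronglyMeasurable
    refine Filter.Eventually.of_forall fun x => ?_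
    rw [Real.rpow_neg_one]
    exact hC x
  simpa [smul_eq_mul] using
    hl.integrable_smul_left_of_hasCompactSupport hf.1.continuous hf.2

lemma abs_coord_le (x : E3) (i : Fin 3) : |x i| ≤ ‖x‖ := by
  simpa using PiLp.norm_apply_le x i

lemma abs_coord_mul_le (x : E3) (i j : Fin 3) : |x i * x j| ≤ ‖x‖ ^ 2 := by
  rw [abs_mul, sq]
  exact mul_le_mul (abs_coord_le x i) (abs_coord_le x j) (abs_nonneg _) (norm_nonneg _)

/-- The kernel `xᵢxⱼ/|x|³`. -/
def ker2 (i j : Fin 3) (x : E3) : ℝ := x i * x j * ‖x‖⁻¹ ^ 3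

lemma abs_ker2_le (i j : Fin 3) (x : E3) : |ker2 i j x| ≤ 1 * ‖x‖⁻¹ := by
  unfold ker2
  rw [abs_mul, abs_of_nonneg (a := ‖x‖⁻¹ ^ 3) (by positivity)]
  rcases eq_or_ne x 0 with rfl | hx
  · simp
  have hx' : ‖x‖ ≠ 0 := norm_ne_zero_iff.mpr hx
  calc |x i * x j| * ‖x‖⁻¹ ^ 3 ≤ ‖x‖ ^ 2 * ‖x‖⁻¹ ^ 3 := by
        gcongr; exact abs_coord_mul_le x i j
    _ = 1 * ‖x‖⁻¹ := by field_simp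

lemma measurable_coord (i : Fin 3) : Measurable (fun x : E3 => x i) :=
  (contDiff_coord i).continuous.measurable

lemma measurable_ker2 (i j : Fin 3) : Measurable (ker2 i j) :=
  ((measurable_coord i).mul (measurable_coord j)).mul (measurable_norm.inv.pow_const 3)

lemma IsTest.integrable_mul_inv {f : E3 → ℝ} (hf : IsTest f) :
    Integrable (fun x => f x * ‖x‖⁻¹) :=
  hf.integrable_mul_kernel measurable_norm.inv (C := 1) fun x => by
    rw [abs_of_nonneg (by positivity), one_mul]

lemma IsTest.integrable_mul_ker2 {f : E3 → ℝ} (hf : IsTest f) (i j : Fin 3) :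
    Integrable (fun x => f x * ker2 i j x) :=
  hf.integrable_mul_kernel (measurable_ker2 i j) (abs_ker2_le i j)

lemma IsTest.integrable_mul_norm {f : E3 → ℝ} (hf : IsTest f) :
    Integrable (fun x => f x * ‖x‖) :=
  (hf.1.continuous.mul continuous_norm).integrable_of_hasCompactSupport hf.2.mul_right

/-- The regularization parameters `1/(n+1)`. -/
def epsSeq (n : ℕ) : ℝ := 1 / ((n : ℝ) + 1)

lemma epsSeq_pos (n : ℕ) : 0 < epsSeq n := by unfold epsSeq; positivity

lemma epsSeq_le_one (n : ℕ) : epsSeq n ≤ 1 := by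
  unfold epsSeq
  rw [div_le_one (by positivity)]
  linarith [(Nat.cast_nonneg n : (0 : ℝ) ≤ n)]

lemma tendsto_epsSeq : Tendsto epsSeq atTop (nhds 0) := tendsto_one_div_add_atTop_nhds_zero_nat

lemma tendsto_rho (x : E3) : Tendsto (fun n => rho (epsSeq n) x) atTop (nhds ‖x‖) := by
  have h : Tendsto (fun n => √(‖x‖ ^ 2 + epsSeq n ^ 2)) atTop (nhds √(‖x‖ ^ 2 + 0 ^ 2)) :=
    (tendsto_const_nhds.add (tendsto_epsSeq.pow 2)).sqrt
  simpa [rho] using h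

lemma rho_inv_le {ε : ℝ} {x : E3} (hx : x ≠ 0) : (rho ε x)⁻¹ ≤ ‖x‖⁻¹ :=
  inv_anti₀ (norm_pos_iff.mpr hx) (norm_le_rho ε x)

lemma ae_ne_zero : ∀ᵐ x : E3, x ≠ 0 := by
  simp [ae_iff, measure_singleton]

lemma tendsto_integral_rho_inv {f : E3 → ℝ} (hf : IsTest f) :
    Tendsto (fun n => ∫ x, f x * (rho (epsSeq n) x)⁻¹) atTop (nhds (∫ x, f x * ‖x‖⁻¹)) := by
  refine tendsto_integral_of_dominated_convergence (fun x => ‖f x * ‖x‖⁻¹‖) ?_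
    hf.integrable_mul_inv.norm ?_ ?_
  · intro n
    exact (hf.mul_smooth (contDiff_rho_inv (epsSeq_pos n))).1.continuous.aestronglyMeasurable
  · intro n
    filter_upwards [ae_ne_zero] with x hx
    rw [norm_mul, norm_mul]
    gcongr
    rw [Real.norm_of_nonneg (inv_pos.mpr (rho_pos (epsSeq_pos n) x)).le,
      Real.norm_of_nonneg (by positivity)]
    exact rho_inv_le hx
  · filter_upwards [ae_ne_zero] with x hx
    exact ((tendsto_rho x).inv₀ (norm_ne_zero_iff.mpr hx)).const_mul _

lemma tendsto_integral_rho_ker2 {f : E3 → ℝ} (hf : IsTest f) (i j : Fin 3) :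
    Tendsto (fun n => ∫ x, f x * (x i * x j * (rho (epsSeq n) x)⁻¹ ^ 3)) atTop
      (nhds (∫ x, f x * ker2 i j x)) := by
  refine tendsto_integral_of_dominated_convergence (fun x => ‖f x * ‖x‖⁻¹‖) ?_
    hf.integrable_mul_inv.norm ?_ ?_
  · intro n
    exact (hf.mul_smooth (((contDiff_coord i).mul (contDiff_coord j)).mul
      ((contDiff_rho_inv (epsSeq_pos n)).pow 3))).1.continuous.aestronglyMeasurable
  · intro n
    filter_upwards [ae_ne_zero] with x hx
    have hx' : ‖x‖ ≠ 0 := norm_ne_zero_iff.mpr hx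
    have hp := inv_pos.mpr (rho_pos (epsSeq_pos n) x)
    rw [norm_mul (f x), norm_mul (f x)]
    gcongr
    rw [Real.norm_eq_abs, abs_mul, abs_of_nonneg (a := (rho (epsSeq n) x)⁻¹ ^ 3) (by positivity),
      Real.norm_of_nonneg (by positivity)]
    calc |x i * x j| * (rho (epsSeq n) x)⁻¹ ^ 3 ≤ ‖x‖ ^ 2 * ‖x‖⁻¹ ^ 3 := by
          gcongr
          · exact abs_coord_mul_le x i j
          · exact norm_le_rho _ x
      _ = ‖x‖⁻¹ := by field_simp
  · filter_upwards [ae_ne_zero] with x hx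
    exact ((((tendsto_rho x).inv₀ (norm_ne_zero_iff.mpr hx)).pow 3).const_mul _).const_mul _

lemma tendsto_integral_rho {f : E3 → ℝ} (hf : IsTest f) :
    Tendsto (fun n => ∫ x, f x * rho (epsSeq n) x) atTop (nhds (∫ x, f x * ‖x‖)) := by
  refine tendsto_integral_of_dominated_convergence (fun x => ‖f x * (‖x‖ + 1)‖) ?_ ?_ ?_ ?_
  · intro n
    exact (hf.mul_smooth (contDiff_rho (epsSeq_pos n))).1.continuous.aestronglyMeasurable
  · simpa only [mul_add, mul_one, Pi.add_apply] using
      (hf.integrable_mul_norm.add hf.integrable).norm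
  · intro n
    refine Filter.Eventually.of_forall fun x => ?_
    rw [norm_mul, norm_mul]
    gcongr
    rw [Real.norm_of_nonneg (rho_pos (epsSeq_pos n) x).le, Real.norm_of_nonneg (by positivity)]
    linarith [rho_le (epsSeq_pos n) x, epsSeq_le_one n]
  · exact Filter.Eventually.of_forall fun x => (tendsto_rho x).const_mul _

/-- `∂ᵢ∂ⱼ|x| = δᵢⱼ/|x| - xᵢxⱼ/|x|³` in the sense of distributions. -/
lemma integral_pd_pd_mul_norm {f : E3 → ℝ} (hf : IsTest f) (i j : Fin 3) :
    ∫ x, pd i (pd j f) x * ‖x‖ =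
      (if i = j then 1 else 0) * (∫ x, f x * ‖x‖⁻¹) - ∫ x, f x * ker2 i j x := by
  have hlim := ((tendsto_integral_rho_inv hf).const_mul (if i = j then 1 else 0)).sub
    (tendsto_integral_rho_ker2 hf i j)
  refine tendsto_nhds_unique (tendsto_integral_rho ((hf.pd j).pd i)) (hlim.congr fun n => ?_)
  have hε := epsSeq_pos n
  have hs := contDiff_rho hε
  rw [integral_pd_mul (hf.pd j) hs, integral_pd_mul hf (hs.pd_smooth i), neg_neg,
    ← integral_const_mul, ← integral_sub]
  · refine integral_congr_ae (Filter.Eventually.of_forall fun x => ?_)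
    rw [pd_comm hs j i]
    simp only [pd_pd_rho hε]
    ring
  · exact ((hf.mul_smooth (contDiff_rho_inv hε)).const_mul _).integrable
  · exact (hf.mul_smooth (((contDiff_coord i).mul (contDiff_coord j)).mul
      ((contDiff_rho_inv hε).pow 3))).integrable

lemma sum_ker2 (x : E3) : ∑ i, ker2 i i x = ‖x‖⁻¹ := by
  rcases eq_or_ne x 0 with rfl | hx
  · simp [ker2]
  have hx' : ‖x‖ ≠ 0 := norm_ne_zero_iff.mpr hx
  have hn : ‖x‖ ^ 2 = x 0 ^ 2 + x 1 ^ 2 + x 2 ^ 2 := by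
    rw [EuclideanSpace.real_norm_sq_eq, Fin.sum_univ_three]
  simp only [ker2, Fin.sum_univ_three]
  have : x 0 * x 0 * ‖x‖⁻¹ ^ 3 + x 1 * x 1 * ‖x‖⁻¹ ^ 3 + x 2 * x 2 * ‖x‖⁻¹ ^ 3
      = ‖x‖ ^ 2 * ‖x‖⁻¹ ^ 3 := by rw [hn]; ring
  rw [this]; field_simp

/-- `Δ|x| = 2/|x|` in the sense of distributions: the trace of the formula for the Hessian. -/
lemma integral_lap_mul_norm {f : E3 → ℝ} (hf : IsTest f) :
    ∫ x, lap f x * ‖x‖ = 2 * ∫ x, f x * ‖x‖⁻¹ := by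
  have h1 : ∫ x, f x * ‖x‖⁻¹ = ∑ i, ∫ x, f x * ker2 i i x := by
    rw [← integral_finsetSum _ fun i _ => hf.integrable_mul_ker2 i i]
    simp only [← Finset.mul_sum, sum_ker2]
  have h2 : ∫ x, lap f x * ‖x‖ = ∑ i, ∫ x, pd i (pd i f) x * ‖x‖ := by
    rw [← integral_finsetSum _ fun i _ => ((hf.pd i).pd i).integrable_mul_norm]
    simp only [← Finset.sum_mul, lap]
  rw [h2]
  simp only [integral_pd_pd_mul_norm hf, if_true]
  rw [Finset.sum_sub_distrib, ← h1]
  simp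
  ring

/-! ### The fundamental solution of the Laplacian -/

/-- The mass of the regularized delta function: `∫ 3(1+|z|²)^{-5/2} dz = 4π`, from the radial
primitive `(r/√(r²+1))³`. -/
lemma integral_bump : Integrable (fun z : E3 => 3 * (rho 1 z)⁻¹ ^ 5) ∧
    ∫ z : E3, 3 * (rho 1 z)⁻¹ ^ 5 = 4 * π := by
  set φ : ℝ → ℝ := fun r => 3 * (√(r ^ 2 + 1))⁻¹ ^ 5 with hφ
  set G : ℝ → ℝ := fun r => (r * (√(r ^ 2 + 1))⁻¹) ^ 3 with hG
  have e : (fun z : E3 => 3 * (rho 1 z)⁻¹ ^ 5) = fun z => φ ‖z‖ := by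
    funext z; simp [hφ, rho]
  have hd : ∀ r : ℝ, HasDerivAt G (r ^ 2 * φ r) r := by
    intro r
    have hpos : (0 : ℝ) < r ^ 2 + 1 := by positivity
    have hs : √(r ^ 2 + 1) ≠ 0 := (Real.sqrt_pos.mpr hpos).ne'
    have h1 : HasDerivAt (fun r : ℝ => r ^ 2 + 1) (2 * r) r := by
      simpa using (hasDerivAt_pow 2 r).add_const 1
    have h2 := (((hasDerivAt_id r).mul ((h1.sqrt hpos.ne').inv hs)).pow 3)
    refine h2.congr_deriv ?_
    have hsq : √(r ^ 2 + 1) ^ 2 = r ^ 2 + 1 := Real.sq_sqrt hpos.le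
    simp only [hφ, id, Pi.mul_apply, Pi.inv_apply]
    have h3 : (√(r ^ 2 + 1))⁻¹ = √(r ^ 2 + 1) ^ 2 * (√(r ^ 2 + 1))⁻¹ ^ 3 := by field_simp
    have h4 : 1 * (√(r ^ 2 + 1))⁻¹ + r * (-(2 * r / (2 * √(r ^ 2 + 1))) / √(r ^ 2 + 1) ^ 2)
        = (√(r ^ 2 + 1))⁻¹ ^ 3 := by
      rw [one_mul]
      nth_rewrite 1 [h3]
      rw [hsq]
      field_simp
      rw [hsq]
      ring
    rw [h4]
    norm_num
    ring
  have hlim : Tendsto G atTop (nhds 1) := by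
    have h0 : Tendsto (fun r : ℝ => 1 + (r ^ 2)⁻¹) atTop (nhds (1 + 0)) :=
      tendsto_const_nhds.add (tendsto_pow_atTop two_ne_zero).inv_tendsto_atTop
    have h1 : Tendsto (fun r : ℝ => (√(1 + (r ^ 2)⁻¹))⁻¹ ^ 3) atTop (nhds ((√(1 + 0))⁻¹ ^ 3)) :=
      (h0.sqrt.inv₀ (by simp)).pow 3
    simp only [add_zero, Real.sqrt_one, inv_one, one_pow] at h1
    refine h1.congr' ?_
    filter_upwards [eventually_gt_atTop 0] with r hr
    have : 1 + (r ^ 2)⁻¹ = (r ^ 2 + 1) / r ^ 2 := by field_simp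
    simp only [hG]
    rw [this, Real.sqrt_div (by positivity), Real.sqrt_sq hr.le, inv_div, div_eq_mul_inv]
  have hnn : ∀ r ∈ Set.Ioi (0 : ℝ), 0 ≤ r ^ 2 * φ r := fun r _ => by
    simp only [hφ]; positivity
  have hint := integrableOn_Ioi_deriv_of_nonneg' (fun r _ => hd r) hnn hlim
  have hval := integral_Ioi_of_hasDerivAt_of_tendsto' (fun r _ => hd r) hint hlim
  rw [e]
  constructor
  · rw [integrable_fun_norm_addHaar volume (f := φ)]
    simpa using hint
  · rw [integral_fun_norm_addHaar volume φ]
    have hv : (volume : Measure E3).real (ball 0 1) = π * 4 / 3 := by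
      rw [Measure.real, EuclideanSpace.volume_ball_fin_three]
      simp only [ENNReal.ofReal_one, one_pow, one_mul]
      exact ENNReal.toReal_ofReal (by positivity)
    have h0 : G 0 = 0 := by simp [hG]
    rw [hv]
    simp only [finrank_euclideanSpace, Fintype.card_fin, smul_eq_mul, nsmul_eq_mul]
    norm_num
    rw [hval, h0]
    ring

lemma rho_smul {ε : ℝ} (hε : 0 < ε) (z : E3) : rho ε (ε • z) = ε * rho 1 z := by
  unfold rho
  rw [norm_smul, Real.norm_of_nonneg hε.le]
  have : (ε * ‖z‖) ^ 2 + ε ^ 2 = ε ^ 2 * (‖z‖ ^ 2 + 1 ^ 2) := by ring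
  rw [this, Real.sqrt_mul (by positivity), Real.sqrt_sq hε.le]

/-- `Δ(1/|x|) = -4πδ` in the sense of distributions. -/
lemma integral_lap_mul_inv {f : E3 → ℝ} (hf : IsTest f) :
    ∫ x, lap f x * ‖x‖⁻¹ = - (4 * π * f 0) := by
  have hlim : Tendsto (fun n => - ∫ z, f (epsSeq n • z) * (3 * (rho 1 z)⁻¹ ^ 5)) atTop
      (nhds (- ∫ z, f 0 * (3 * (rho 1 z)⁻¹ ^ 5))) := by
    obtain ⟨C, hC⟩ := hf.1.continuous.bounded_above_of_compact_support hf.2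
    refine (tendsto_integral_of_dominated_convergence
      (fun z => C * ‖3 * (rho 1 z)⁻¹ ^ 5‖) ?_ (integral_bump.1.norm.const_mul C) ?_ ?_).neg
    · intro n
      exact ((hf.1.continuous.comp (continuous_const_smul _)).mul (continuous_const.mul
        ((contDiff_rho_inv one_pos).continuous.pow 5))).aestronglyMeasurable
    · intro n
      refine Filter.Eventually.of_forall fun z => ?_
      rw [norm_mul]
      gcongr
      exact hC _
    · refine Filter.Eventually.of_forall fun z => ?_
      refine Tendsto.mul_const _ ?_
      have h1 : Tendsto (fun n => epsSeq n • z) atTop (nhds ((0 : ℝ) • z)) :=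
        tendsto_epsSeq.smul_const z
      rw [zero_smul] at h1
      exact (hf.1.continuous.tendsto 0).comp h1
  rw [integral_const_mul, integral_bump.2] at hlim
  have hval : - (4 * π * f 0) = - (f 0 * (4 * π)) := by ring
  rw [hval]
  refine tendsto_nhds_unique (tendsto_integral_rho_inv hf.lap) (hlim.congr fun n => ?_)
  have hε := epsSeq_pos n
  set ε := epsSeq n
  have hs := contDiff_rho_inv hε
  have h1 : ∫ x, lap f x * (rho ε x)⁻¹ = ∫ x, f x * lap (fun x => (rho ε x)⁻¹) x := by
    simp only [lap, Finset.sum_mul, Finset.mul_sum]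
    rw [integral_finsetSum _ fun i _ => (((hf.pd i).pd i).mul_smooth hs).integrable,
      integral_finsetSum _ fun i _ =>
        (hf.mul_smooth ((hs.pd_smooth i).pd_smooth i)).integrable]
    refine Finset.sum_congr rfl fun i _ => ?_
    rw [integral_pd_mul (hf.pd i) hs, integral_pd_mul hf (hs.pd_smooth i), neg_neg]
  have h2 := Measure.integral_comp_smul (volume : Measure E3)
    (fun x => f x * lap (fun x => (rho ε x)⁻¹) x) ε
  rw [h1]
  simp only [finrank_euclideanSpace, Fintype.card_fin, smul_eq_mul] at h2
  rw [abs_of_pos (by positivity)] at h2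
  have h3 : ∫ x, f x * lap (fun x => (rho ε x)⁻¹) x =
      ε ^ 3 * ∫ z, f (ε • z) * lap (fun x => (rho ε x)⁻¹) (ε • z) := by
    rw [h2]; field_simp
  rw [h3, ← integral_const_mul, ← integral_neg]
  refine integral_congr_ae (Filter.Eventually.of_forall fun z => ?_)
  simp only [lap_rho_inv hε, rho_smul hε]
  have := (rho_pos one_pos z).ne'
  field_simp

/-! ### Distributional identities for the kernels `1/|x-y|` and `(x-y)ᵢ(x-y)ⱼ/|x-y|³` -/

lemma integral_translate (F : E3 → ℝ) (y : E3) : ∫ x, F x = ∫ x, F (x + y) :=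
  (integral_add_right_eq_self F y).symm

lemma IsTest.integrable_N {f : E3 → ℝ} (hf : IsTest f) (y : E3) :
    Integrable (fun x => f x * ‖x - y‖⁻¹) := by
  simpa using (hf.translate y).integrable_mul_inv.comp_sub_right y

lemma IsTest.integrable_K {f : E3 → ℝ} (hf : IsTest f) (y : E3) (i j : Fin 3) :
    Integrable (fun x => f x * ker2 i j (x - y)) := by
  simpa using ((hf.translate y).integrable_mul_ker2 i j).comp_sub_right y

lemma integral_lap_mul_N {f : E3 → ℝ} (hf : IsTest f) (y : E3) :
    ∫ x, lap f x * ‖x - y‖⁻¹ = - (4 * π * f y) := by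
  rw [integral_translate _ y]
  have h := integral_lap_mul_inv (hf.translate y)
  rw [lap_translate] at h
  simpa using h

/-- Since `xᵢxⱼ/|x|³ = δᵢⱼ/|x| - ∂ᵢ∂ⱼ|x|` and `Δ|x| = 2/|x|`, the Laplacian of `xᵢxⱼ/|x|³` is
`δᵢⱼ Δ(1/|x|) - 2 ∂ᵢ∂ⱼ(1/|x|)`. -/
lemma integral_lap_mul_K {f : E3 → ℝ} (hf : IsTest f) (y : E3) (i j : Fin 3) :
    ∫ x, lap f x * ker2 i j (x - y) =
      (if i = j then 1 else 0) * (∫ x, lap f x * ‖x - y‖⁻¹)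
        - 2 * ∫ x, pd i (pd j f) x * ‖x - y‖⁻¹ := by
  have hg := hf.translate y
  have h1 := integral_pd_pd_mul_norm hg.lap i j
  rw [pd_lap hg.1, pd_lap (hg.1.pd_smooth j), integral_lap_mul_norm ((hg.pd j).pd i)] at h1
  simp only [lap_translate, pd_translate] at h1
  rw [integral_translate _ y, integral_translate (fun x => lap f x * ‖x - y‖⁻¹) y,
    integral_translate (fun x => pd i (pd j f) x * ‖x - y‖⁻¹) y]
  simp only [add_sub_cancel_right]
  linarith

/-- `∑ᵢ ∂ᵢ(xᵢxⱼ/|x|³) = -∂ⱼ(1/|x|)` in the sense of distributions. -/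
lemma sum_integral_pd_mul_K {f : E3 → ℝ} (hf : IsTest f) (y : E3) (j : Fin 3) :
    ∑ i, ∫ x, pd i f x * ker2 i j (x - y) = - ∫ x, pd j f x * ‖x - y‖⁻¹ := by
  have hg := hf.translate y
  have h1 : ∀ i, ∫ x, pd i (fun x => f (x + y)) x * ker2 i j x =
      (if i = j then 1 else 0) * (∫ x, pd i (fun x => f (x + y)) x * ‖x‖⁻¹)
        - ∫ x, pd i (pd i (pd j (fun x => f (x + y)))) x * ‖x‖ := by
    intro i
    rw [pd_comm hg.1 i j, integral_pd_pd_mul_norm (hg.pd i) i j]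
    ring
  have h2 : ∑ i, ∫ x, pd i (pd i (pd j (fun x => f (x + y)))) x * ‖x‖ =
      2 * ∫ x, pd j (fun x => f (x + y)) x * ‖x‖⁻¹ := by
    rw [← integral_lap_mul_norm (hg.pd j),
      ← integral_finsetSum _ fun i _ => (((hg.pd j).pd i).pd i).integrable_mul_norm]
    simp only [lap, Finset.sum_mul]
  have h3 : ∀ i, ∫ x, pd i f x * ker2 i j (x - y) =
      ∫ x, pd i (fun x => f (x + y)) x * ker2 i j x := by
    intro i
    rw [integral_translate _ y]
    simp only [add_sub_cancel_right, pd_translate]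
  rw [integral_translate (fun x => pd j f x * ‖x - y‖⁻¹) y]
  simp only [add_sub_cancel_right]
  simp only [h3, h1, Finset.sum_sub_distrib, h2]
  simp only [ite_mul, one_mul, zero_mul, Finset.sum_ite_eq', Finset.mem_univ, if_true]
  simp only [pd_translate]
  ring

/-! ### The energy identity -/

/-- The quadratic form in the Jacobian `M i k = ∂ₖuᵢ` that appears, multiplied by `c_α/|x-y|`,
in the energy identity; `w` stands for the unit vector `(x-y)/|x-y|` and `a = α/(α+2)`. -/
def qform (α : ℝ) (M : Fin 3 → Fin 3 → ℝ) (w : Fin 3 → ℝ) : ℝ :=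
  (∑ i, ∑ k, M i k ^ 2) + α * (∑ k, M k k) ^ 2
    - α / (α + 2) * ((∑ k, M k k) ^ 2 - ∑ j, ∑ k, M k j * M j k)
    + α / (α + 2) * (∑ k, (∑ i, w i * M i k) ^ 2)
    + α * (α / (α + 2)) * (∑ k, M k k) * ∑ i, ∑ j, w i * w j * M j i

lemma lap_mul {f g : E3 → ℝ} (hf : ContDiff ℝ (⊤ : ℕ∞) f) (hg : ContDiff ℝ (⊤ : ℕ∞) g) (x : E3) :
    lap (fun y => f y * g y) x =
      lap f x * g x + 2 * (∑ k, pd k f x * pd k g x) + f x * lap g x := by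
  have e : ∀ k, pd k (fun y => f y * g y) = fun y => pd k f y * g y + f y * pd k g y :=
    fun k => funext (pd_mul hf hg k)
  unfold lap
  simp only [e]
  simp only [pd_add ((hf.pd_smooth _).mul hg) (hf.mul (hg.pd_smooth _)),
    pd_mul (hf.pd_smooth _) hg, pd_mul hf (hg.pd_smooth _), Fin.sum_univ_three]
  ring

lemma ker2_eq (i j : Fin 3) (x : E3) : ker2 i j x = ‖x‖⁻¹ * ((x i * ‖x‖⁻¹) * (x j * ‖x‖⁻¹)) := by
  unfold ker2; ring

lemma Phi_eq (α : ℝ) (x : E3) (i j : Fin 3) :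
    Phi α x i j = cA α * ((if i = j then 1 else 0) * ‖x‖⁻¹ + α / (α + 2) * ker2 i j x) := by
  unfold Phi ker2
  rw [div_eq_mul_inv _ (‖x‖ ^ 2), ← inv_pow]
  ring

section energy

variable {u : E3 → Fin 3 → ℝ}

lemma IsTestOn.comp_test (hu : IsTestOn Set.univ u) (i : Fin 3) : IsTest (fun x => u x i) :=
  ⟨contDiff_pi.mp hu.1 i, hu.2.1.comp_left (g := fun v : Fin 3 → ℝ => v i) rfl⟩

lemma IsTestOn.divg_test (hu : IsTestOn Set.univ u) : IsTest (divg u) :=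
  IsTest.sum fun k => (hu.comp_test k).pd k

/-- `(div u)² - tr((Du)²)`. -/
def nullLag (u : E3 → Fin 3 → ℝ) (x : E3) : ℝ :=
  divg u x * divg u x - ∑ j, ∑ k, pd j (fun z => u z k) x * pd k (fun z => u z j) x

lemma IsTestOn.nullLag_test (hu : IsTestOn Set.univ u) : IsTest (nullLag u) :=
  (hu.divg_test.mul hu.divg_test).sub <| IsTest.sum fun j => IsTest.sum fun k =>
    ((hu.comp_test k).pd j).mul ((hu.comp_test j).pd k)

/-- `∑ ∂ᵢ∂ⱼ(uᵢuⱼ) = 2 div(u div u) - ((div u)² - tr((Du)²))`. -/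
lemma sum_pd_pd_mul (hu : IsTestOn Set.univ u) (x : E3) :
    ∑ i, ∑ j, pd i (pd j (fun z => u z i * u z j)) x =
      2 * (∑ j, pd j (fun z => divg u z * u z j) x) - nullLag u x := by
  have hU := fun i => (hu.comp_test i).1
  have hD := fun i k => (hU i).pd_smooth k
  have e : ∀ i j k, pd k (fun y => u y i * u y j) =
      fun y => pd k (fun z => u z i) y * u y j + u y i * pd k (fun z => u z j) y :=
    fun i j k => funext (pd_mul (hU i) (hU j) k)
  have ed : ∀ k, pd k (divg u) x = ∑ l, pd k (pd l (fun z => u z l)) x := by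
    intro k
    exact pd_sum (fun l => hD l l) k x
  simp only [e, pd_mul hu.divg_test.1 (hU _), ed,
    pd_add ((hD _ _).mul (hU _)) ((hU _).mul (hD _ _)),
    pd_mul (hD _ _) (hU _), pd_mul (hU _) (hD _ _), nullLag]
  simp only [divg, Fin.sum_univ_three]
  simp only [pd_comm (hU _) 1 0, pd_comm (hU _) 2 0, pd_comm (hU _) 2 1]
  ring

/-- The difference, divided by `c_α`, between the energy density and the quadratic form: complete
derivatives of `uᵢuⱼ` and `uⱼ div u` times the two kernels, plus the term
`a((div u)² - tr((Du)²))/|x-y|` that compensates its counterpart in `qform`. -/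
def remainder (α : ℝ) (u : E3 → Fin 3 → ℝ) (y x : E3) : ℝ :=
  (-(1 / 2)) * (∑ i, lap (fun z => u z i * u z i) x * ‖x - y‖⁻¹)
    + (-(1 / 2) * (α / (α + 2))) *
      (∑ i, ∑ j, lap (fun z => u z i * u z j) x * ker2 i j (x - y))
    + (-α) * (∑ i, pd i (fun z => divg u z * u z i) x * ‖x - y‖⁻¹)
    + (-(α * (α / (α + 2)))) *
      (∑ j, ∑ i, pd i (fun z => divg u z * u z j) x * ker2 i j (x - y))
    + α / (α + 2) * (nullLag u x * ‖x - y‖⁻¹)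

lemma density_eq (α : ℝ) (hu : IsTestOn Set.univ u) (y x : E3) :
    ∑ i, ∑ j, lame α u x i * Phi α (x - y) i j * u x j =
      cA α * (‖x - y‖⁻¹ * qform α (fun i k => pd k (fun z => u z i) x)
        (fun i => (x - y) i * ‖x - y‖⁻¹)) + cA α * remainder α u y x := by
  have hU := fun i => (hu.comp_test i).1
  have hK := fun i j => ker2_eq i j (x - y)
  have hd : divg u x = ∑ k, pd k (fun z => u z k) x := rfl
  simp only [Phi_eq, remainder, qform, lame, lap_mul (hU _) (hU _), pd_mul hu.divg_test.1 (hU _),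
    nullLag, hK]
  rw [hd]
  generalize ‖x - y‖⁻¹ = N
  generalize hw : (fun i => (x - y) i) = w
  have hw' : ∀ i, (x - y) i = w i := fun i => congrFun hw i
  simp only [hw']
  generalize hM : (fun i k => pd k (fun z => u z i) x) = M
  have hM' : ∀ i k, pd k (fun z => u z i) x = M i k := fun i k => congrFun (congrFun hM i) k
  simp only [hM']
  generalize α / (α + 2) = a
  simp only [Fin.sum_univ_three, Fin.isValue, Fin.reduceEq, if_true, if_false]
  ring

lemma integrable_remainder (α : ℝ) (hu : IsTestOn Set.univ u) (y : E3) :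
    Integrable (remainder α u y) ∧
    ∫ x, remainder α u y x = 2 * π * (1 + α / (α + 2)) * (∑ i, u y i ^ 2)
      + (2 * (α / (α + 2)) - α + α * (α / (α + 2))) *
        ∑ i, ∫ x, pd i (fun z => divg u z * u z i) x * ‖x - y‖⁻¹ := by
  have hU := hu.comp_test
  have hg := fun i j => (hU i).mul (hU j)
  have hW := fun i => hu.divg_test.mul (hU i)
  have i1 : ∀ i, Integrable fun x => lap (fun z => u z i * u z i) x * ‖x - y‖⁻¹ :=
    fun i => (hg i i).lap.integrable_N y
  have i2 : ∀ i j, Integrable fun x => lap (fun z => u z i * u z j) x * ker2 i j (x - y) :=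
    fun i j => (hg i j).lap.integrable_K y i j
  have i3 : ∀ i, Integrable fun x => pd i (fun z => divg u z * u z i) x * ‖x - y‖⁻¹ :=
    fun i => ((hW i).pd i).integrable_N y
  have i4 : ∀ j i, Integrable fun x => pd i (fun z => divg u z * u z j) x * ker2 i j (x - y) :=
    fun j i => ((hW j).pd i).integrable_K y i j
  have i5 := hu.nullLag_test.integrable_N y
  have i6 : ∀ i j, Integrable fun x => pd i (pd j (fun z => u z i * u z j)) x * ‖x - y‖⁻¹ :=
    fun i j => (((hg i j).pd j).pd i).integrable_N y
  have I1 := integrable_finsetSum Finset.univ fun i _ => i1 i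
  have I2' := fun i => integrable_finsetSum Finset.univ fun j _ => i2 i j
  have I2 := integrable_finsetSum Finset.univ fun i _ => I2' i
  have I3 := integrable_finsetSum Finset.univ fun i _ => i3 i
  have I4' := fun j => integrable_finsetSum Finset.univ fun i _ => i4 j i
  have I4 := integrable_finsetSum Finset.univ fun j _ => I4' j
  have A1 := I1.const_mul (-(1 / 2))
  have A2 := A1.add (I2.const_mul (-(1 / 2) * (α / (α + 2))))
  have A3 := A2.add (I3.const_mul (-α))
  have A4 := A3.add (I4.const_mul (-(α * (α / (α + 2)))))
  have A5 := A4.add (i5.const_mul (α / (α + 2)))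
  refine ⟨A5, ?_⟩
  have hint : ∫ x, remainder α u y x =
      (-(1 / 2)) * (∑ i, ∫ x, lap (fun z => u z i * u z i) x * ‖x - y‖⁻¹)
    + (-(1 / 2) * (α / (α + 2))) *
      (∑ i, ∑ j, ∫ x, lap (fun z => u z i * u z j) x * ker2 i j (x - y))
    + (-α) * (∑ i, ∫ x, pd i (fun z => divg u z * u z i) x * ‖x - y‖⁻¹)
    + (-(α * (α / (α + 2)))) *
      (∑ j, ∑ i, ∫ x, pd i (fun z => divg u z * u z j) x * ker2 i j (x - y))
    + α / (α + 2) * (∫ x, nullLag u x * ‖x - y‖⁻¹) := by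
    simp only [← integral_finsetSum _ fun i _ => i1 i, ← integral_finsetSum _ fun i _ => i3 i,
      ← integral_finsetSum _ fun j _ => i2 _ j, ← integral_finsetSum _ fun i _ => I2' i,
      ← integral_finsetSum _ fun i _ => i4 _ i, ← integral_finsetSum _ fun j _ => I4' j,
      ← integral_const_mul]
    rw [← integral_add' A1 (I2.const_mul _), ← integral_add' A2 (I3.const_mul _),
      ← integral_add' A3 (I4.const_mul _), ← integral_add' A4 (i5.const_mul _)]
    rfl
  have h6 : ∑ i, ∑ j, ∫ x, pd i (pd j (fun z => u z i * u z j)) x * ‖x - y‖⁻¹ =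
      2 * (∑ i, ∫ x, pd i (fun z => divg u z * u z i) x * ‖x - y‖⁻¹)
        - ∫ x, nullLag u x * ‖x - y‖⁻¹ := by
    have I6' := fun i => integrable_finsetSum Finset.univ fun j _ => i6 i j
    simp only [← integral_finsetSum _ fun j _ => i6 _ j, ← integral_finsetSum _ fun i _ => I6' i]
    rw [← integral_finsetSum _ fun i _ => i3 i, ← integral_const_mul,
      ← integral_sub (I3.const_mul 2) i5]
    refine integral_congr_ae (Filter.Eventually.of_forall fun x => ?_)
    simp only [← Finset.sum_mul, sum_pd_pd_mul hu x]
    ring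
  have h2 : ∑ i, ∑ j, ∫ x, lap (fun z => u z i * u z j) x * ker2 i j (x - y) =
      (∑ i, ∫ x, lap (fun z => u z i * u z i) x * ‖x - y‖⁻¹)
        - 2 * ∑ i, ∑ j, ∫ x, pd i (pd j (fun z => u z i * u z j)) x * ‖x - y‖⁻¹ := by
    simp only [integral_lap_mul_K (hg _ _) y, Finset.sum_sub_distrib, Finset.mul_sum]
    simp
  rw [hint, h2, h6]
  simp only [sum_integral_pd_mul_K (hW _) y, Finset.sum_neg_distrib,
    integral_lap_mul_N (hg _ _) y, Fin.sum_univ_three]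
  ring

lemma integrable_qform (α : ℝ) (hu : IsTestOn Set.univ u) (y : E3) :
    Integrable fun x => ‖x - y‖⁻¹ * qform α (fun i k => pd k (fun z => u z i) x)
        (fun i => (x - y) i * ‖x - y‖⁻¹) := by
  have hU := hu.comp_test
  have hD := fun i k => (hU i).pd k
  have h1 : IsTest fun x => (∑ i, ∑ k, pd k (fun z => u z i) x * pd k (fun z => u z i) x)
      + α * (divg u x * divg u x) - α / (α + 2) * nullLag u x :=
    ((IsTest.sum fun i => IsTest.sum fun k => (hD i k).mul (hD i k)).add
      ((hu.divg_test.mul hu.divg_test).const_mul α)).sub (hu.nullLag_test.const_mul _)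
  have h2 : ∀ i j, IsTest fun x => α / (α + 2) *
      (∑ k, pd k (fun z => u z i) x * pd k (fun z => u z j) x)
      + α * (α / (α + 2)) * (divg u x * pd i (fun z => u z j) x) := fun i j =>
    ((IsTest.sum fun k => (hD i k).mul (hD j k)).const_mul _).add
      ((hu.divg_test.mul (hD j i)).const_mul _)
  refine ((h1.integrable_N y).add (integrable_finsetSum Finset.univ fun i _ =>
    integrable_finsetSum Finset.univ fun j _ => (h2 i j).integrable_K y i j)).congr
    (Filter.Eventually.of_forall fun x => ?_)
  simp only [Pi.add_apply, qform, nullLag, ker2_eq, divg, Fin.sum_univ_three]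
  ring

/-- The energy identity: the energy is `½|u(y)|²` plus the integral of a quadratic form in `Du`
alone. -/
lemma energy_identity {α : ℝ} (hα : -1 < α) (hu : IsTestOn Set.univ u) (y : E3) :
    lameEnergy α u y = (1 / 2) * (∑ i, u y i ^ 2) +
      cA α * ∫ x, ‖x - y‖⁻¹ * qform α (fun i k => pd k (fun z => u z i) x)
        (fun i => (x - y) i * ‖x - y‖⁻¹) := by
  have hr := integrable_remainder α hu y
  have h1 : α + 1 ≠ 0 := by linarith
  have h2 : α + 2 ≠ 0 := by linarith
  unfold lameEnergy
  simp only [density_eq α hu y]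
  rw [integral_add ((integrable_qform α hu y).const_mul _) (hr.1.const_mul _),
    integral_const_mul, integral_const_mul, hr.2]
  have hz : 2 * (α / (α + 2)) - α + α * (α / (α + 2)) = 0 := by field_simp; ring
  have hc : cA α * (2 * π * (1 + α / (α + 2))) = 1 / 2 := by
    unfold cA
    have := Real.pi_ne_zero
    field_simp
    ring
  rw [hz, zero_mul, add_zero, ← mul_assoc, hc]
  ring

end energy

/-! ### Positivity of the quadratic form -/

/-- Pointwise coercivity of the quadratic form. With `a = α/(α+2)`, `s = wᵀM`, `p = s·w` and
`d = tr M` the form is `|M|² + a((α+1)d² + αdp + |s|² + tr M²)`; for `α ≥ 0` one uses `p² ≤ |s|²`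
and `α² ≤ 4(α+1)`, for small negative `α` a crude bound of the bracket. -/
lemma qform_coercive {α : ℝ} (h : (0 ≤ α ∧ α ≤ 2) ∨ (-(1 / 4) ≤ α ∧ α < 0))
    (M : Fin 3 → Fin 3 → ℝ) (w : Fin 3 → ℝ) (hw : ∑ i, w i ^ 2 ≤ 1) :
    (1 / 8) * (∑ i, ∑ k, M i k ^ 2) ≤ qform α M w := by
  set S := ∑ i, ∑ k, M i k ^ 2 with hS
  set d := ∑ k, M k k with hd
  set t := ∑ j, ∑ k, M k j * M j k with ht
  set s : Fin 3 → ℝ := fun k => ∑ i, w i * M i k with hs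
  set s2 := ∑ k, s k ^ 2 with hs2
  set p := ∑ i, ∑ j, w i * w j * M j i with hp
  have hq : qform α M w = S + α / (α + 2) * ((α + 1) * d ^ 2 + α * d * p + s2 + t) := by
    have h2 : α + 2 ≠ 0 := by rcases h with h | h <;> linarith
    have : qform α M w = S + α * d ^ 2 - α / (α + 2) * (d ^ 2 - t) + α / (α + 2) * s2
      + α * (α / (α + 2)) * d * p := rfl
    rw [this]
    field_simp
    ring
  have hps : p = ∑ k, w k * s k := by
    simp only [hp, hs, Fin.sum_univ_three]; ring
  have hs20 : 0 ≤ s2 := Finset.sum_nonneg fun k _ => sq_nonneg _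
  have hS0 : 0 ≤ S := Finset.sum_nonneg fun i _ => Finset.sum_nonneg fun k _ => sq_nonneg _
  have hp2 : p ^ 2 ≤ s2 := by
    rw [hps]
    refine (Finset.sum_mul_sq_le_sq_mul_sq Finset.univ w s).trans ?_
    exact mul_le_of_le_one_left hs20 hw
  have hs2S : s2 ≤ S := by
    have : ∀ k, s k ^ 2 ≤ ∑ i, M i k ^ 2 := fun k =>
      (Finset.sum_mul_sq_le_sq_mul_sq Finset.univ w fun i => M i k).trans
        (mul_le_of_le_one_left (Finset.sum_nonneg fun i _ => sq_nonneg _) hw)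
    rw [hS, Finset.sum_comm]
    exact Finset.sum_le_sum fun k _ => this k
  have ht1 : -S ≤ t := by
    simp only [hS, ht, Fin.sum_univ_three]
    nlinarith [sq_nonneg (M 0 1 + M 1 0), sq_nonneg (M 0 2 + M 2 0), sq_nonneg (M 1 2 + M 2 1),
      sq_nonneg (M 0 0), sq_nonneg (M 1 1), sq_nonneg (M 2 2)]
  have ht2 : t ≤ S := by
    simp only [hS, ht, Fin.sum_univ_three]
    nlinarith [sq_nonneg (M 0 1 - M 1 0), sq_nonneg (M 0 2 - M 2 0), sq_nonneg (M 1 2 - M 2 1)]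
  have hdS : d ^ 2 ≤ 3 * S := by
    simp only [hS, hd, Fin.sum_univ_three]
    nlinarith [sq_nonneg (M 0 0 - M 1 1), sq_nonneg (M 0 0 - M 2 2), sq_nonneg (M 1 1 - M 2 2),
      sq_nonneg (M 0 1), sq_nonneg (M 1 0), sq_nonneg (M 0 2), sq_nonneg (M 2 0),
      sq_nonneg (M 1 2), sq_nonneg (M 2 1)]
  rw [hq]
  rcases h with ⟨h0, h2⟩ | ⟨h4, h0⟩
  · have ha : 0 ≤ α / (α + 2) := by positivity
    have ha' : α / (α + 2) ≤ 1 / 2 := by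
      rw [div_le_iff₀ (by linarith)]; linarith
    have hb : -S ≤ (α + 1) * d ^ 2 + α * d * p + s2 + t := by
      nlinarith [sq_nonneg (p + α / 2 * d), sq_nonneg d, mul_nonneg h0 (sub_nonneg.mpr h2),
        mul_nonneg (mul_nonneg h0 (sub_nonneg.mpr h2)) (sq_nonneg d),
        mul_nonneg h0 (sq_nonneg d)]
    generalize (α + 1) * d ^ 2 + α * d * p + s2 + t = B at hb ⊢
    generalize α / (α + 2) = a at ha ha' ⊢
    linarith [mul_le_mul_of_nonneg_left hb ha, mul_le_mul_of_nonneg_right ha' hS0]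
  · have ha : 0 ≤ -(α / (α + 2)) := by
      rw [← neg_div]; exact div_nonneg (by linarith) (by linarith)
    have ha' : -(α / (α + 2)) ≤ 1 / 7 := by
      rw [← neg_div, div_le_iff₀ (by linarith)]; linarith
    have hdp : α * d * p ≤ 1 / 2 * S := by
      have : 0 ≤ (-α) * (d + p) ^ 2 := mul_nonneg (by linarith) (sq_nonneg _)
      have h5 : (-α) * (d ^ 2 + p ^ 2) ≤ 1 / 4 * (4 * S) :=
        mul_le_mul (by linarith) (by linarith) (by positivity) (by norm_num)
      nlinarith
    have hd1 : (α + 1) * d ^ 2 ≤ 3 * S := by nlinarith [sq_nonneg d]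
    have hb : (α + 1) * d ^ 2 + α * d * p + s2 + t ≤ 11 / 2 * S := by linarith
    generalize (α + 1) * d ^ 2 + α * d * p + s2 + t = B at hb ⊢
    generalize α / (α + 2) = a at ha ha' ⊢
    linarith [mul_le_mul_of_nonneg_left hb ha, mul_le_mul_of_nonneg_right ha' hS0]

/-- The polynomial conditions confine `α` to `[-1/4, 2]`. -/
lemma alpha_range (α : ℝ)
    (h : (0 ≤ α ∧ (α ^ 4 - 4 * (1 - Real.sqrt 2) * α ^ 3 - 12 * (3 - Real.sqrt 2) * α ^ 2 - 12 * (6 - Real.sqrt 2) * α - 48 < 0) ∧ (6 * α ^ 5 + (23 + 3 * Real.sqrt 2) * α ^ 4 + (13 + 19 * Real.sqrt 2) * α ^ 3 - (77 - 38 * Real.sqrt 2) * α ^ 2 - (157 - 24 * Real.sqrt 2) * α - 96 < 0)) ∨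
         (-1 < α ∧ α < 0 ∧ (0 < -(2 + 7 * Real.sqrt 3) * α ^ 4 + 2 * (15 + Real.sqrt 2 - 11 * Real.sqrt 3 + Real.sqrt 6) * α ^ 3 + 2 * (57 + 3 * Real.sqrt 2 - 10 * Real.sqrt 3 + 3 * Real.sqrt 6) * α ^ 2 + 6 * (20 + Real.sqrt 2 + Real.sqrt 6) * α + 24))) :
    (0 ≤ α ∧ α ≤ 2) ∨ (-(1 / 4) ≤ α ∧ α < 0) := by
  have a2 : 1.41 < √2 := Real.lt_sqrt_of_sq_lt (by norm_num)
  have b2 : √2 < 1.42 := (Real.sqrt_lt' (by norm_num)).mpr (by norm_num)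
  have a3 : 1.73 < √3 := Real.lt_sqrt_of_sq_lt (by norm_num)
  have b3 : √3 < 1.74 := (Real.sqrt_lt' (by norm_num)).mpr (by norm_num)
  have a6 : 2.44 < √6 := Real.lt_sqrt_of_sq_lt (by norm_num)
  have b6 : √6 < 2.45 := (Real.sqrt_lt' (by norm_num)).mpr (by norm_num)
  rcases h with ⟨h0, -, h⟩ | ⟨h1, h0, h⟩
  · left
    refine ⟨h0, ?_⟩
    by_contra! hc
    have c4 : 27 * α ^ 4 ≤ (23 + 3 * √2) * α ^ 4 := by gcongr; linarith
    have c3 : 39 * α ^ 3 ≤ (13 + 19 * √2) * α ^ 3 := by gcongr; linarith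
    have c2 : (77 - 38 * √2) * α ^ 2 ≤ 24 * α ^ 2 := by gcongr; linarith
    have c1 : (157 - 24 * √2) * α ≤ 124 * α := by gcongr; linarith
    have e2 : 2 * α ≤ α ^ 2 := by nlinarith
    have e3 : 2 * α ^ 2 ≤ α ^ 3 := by nlinarith [sq_nonneg α]
    have e4 : 2 * α ^ 3 ≤ α ^ 4 := by nlinarith [pow_pos (lt_trans two_pos hc) 3]
    have e5 : 0 ≤ α ^ 5 := by positivity
    linarith
  · right
    refine ⟨?_, h0⟩
    by_contra! hc
    -- In terms of `b = -α ∈ (1/4, 1)` the polynomial is bounded by `24 - 143b + 104b²`.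
    obtain ⟨b, rfl⟩ : ∃ b, α = -b := ⟨-α, by ring⟩
    have hb : 0 < b := by linarith
    have c4 : 0 ≤ (2 + 7 * √3) * b ^ 4 := by positivity
    have c3 : -(2 * (15 + √2 - 11 * √3 + √6)) * b ^ 3 ≤ 1 * b ^ 3 := by gcongr; linarith
    have c2 : 2 * (57 + 3 * √2 - 10 * √3 + 3 * √6) * b ^ 2 ≤ 103 * b ^ 2 := by gcongr; linarith
    have c1 : 143 * b ≤ 6 * (20 + √2 + √6) * b := by gcongr; linarith
    have e3 : b ^ 3 ≤ b ^ 2 := by nlinarith [sq_nonneg b]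
    have e4 : (b - 1 / 4) * (b - 1) ≤ 0 :=
      mul_nonpos_of_nonneg_of_nonpos (by linarith) (by linarith)
    nlinarith

/-- Under the conditions of weighted positive definiteness there is `c > 0`
such that for all test fields `u` and all `y`,
`∫ (Lu)·(Φ(·-y)u) ≥ (1/2)|u(y)|² + c ∫ |Du(x)|²/|x-y| dx`. -/
theorem lame_quantitative_weighted_positive_definite
    (α : ℝ)
    (h : (0 ≤ α ∧ (α ^ 4 - 4 * (1 - Real.sqrt 2) * α ^ 3 - 12 * (3 - Real.sqrt 2) * α ^ 2 - 12 * (6 - Real.sqrt 2) * α - 48 < 0) ∧ (6 * α ^ 5 + (23 + 3 * Real.sqrt 2) * α ^ 4 + (13 + 19 * Real.sqrt 2) * α ^ 3 - (77 - 38 * Real.sqrt 2) * α ^ 2 - (157 - 24 * Real.sqrt 2) * α - 96 < 0)) ∨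
         (-1 < α ∧ α < 0 ∧ (0 < -(2 + 7 * Real.sqrt 3) * α ^ 4 + 2 * (15 + Real.sqrt 2 - 11 * Real.sqrt 3 + Real.sqrt 6) * α ^ 3 + 2 * (57 + 3 * Real.sqrt 2 - 10 * Real.sqrt 3 + 3 * Real.sqrt 6) * α ^ 2 + 6 * (20 + Real.sqrt 2 + Real.sqrt 6) * α + 24))) :
    ∃ c > (0 : ℝ), ∀ u : E3 → Fin 3 → ℝ, IsTestOn Set.univ u → ∀ y : E3,
      (1 / 2) * (∑ i, (u y i) ^ 2) +
          c * ∫ x : E3, (∑ i, ∑ k, (pd k (fun z => u z i) x) ^ 2) * ‖x - y‖⁻¹ ≤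
        lameEnergy α u y := by
  have hα := alpha_range α h
  have hα1 : -1 < α := by rcases hα with h | h <;> linarith
  have hcA : 0 < cA α := by
    unfold cA
    have := Real.pi_pos
    have h1 : 0 < α + 1 := by linarith
    have h2 : 0 < α + 2 := by linarith
    positivity
  refine ⟨cA α * (1 / 8), by positivity, fun u hu y => ?_⟩
  rw [energy_identity hα1 hu y, mul_assoc, ← integral_const_mul]
  gcongr
  · have hD := fun i k => (hu.comp_test i).pd k
    have ht : IsTest fun x => ∑ i, ∑ k, pd k (fun z => u z i) x * pd k (fun z => u z i) x :=
      IsTest.sum fun i => IsTest.sum fun k => (hD i k).mul (hD i k)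
    simpa only [sq] using (ht.integrable_N y).const_mul (1 / 8)
  · exact integrable_qform α hu y
  · intro x
    have hw : ∑ i, ((x - y) i * ‖x - y‖⁻¹) ^ 2 ≤ 1 := by
      simp only [mul_pow]
      rw [← Finset.sum_mul, ← EuclideanSpace.real_norm_sq_eq, ← mul_pow]
      rcases eq_or_ne ‖x - y‖ 0 with h0 | h0
      · simp [h0]
      · simp [h0]
    have hq := mul_le_mul_of_nonneg_left
      (qform_coercive hα (fun i k => pd k (fun z => u z i) x) _ hw)
      (inv_nonneg.mpr (norm_nonneg (x - y)))
    calc _ = ‖x - y‖⁻¹ * (1 / 8 * ∑ i, ∑ k, pd k (fun z => u z i) x ^ 2) := by ring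
      _ ≤ _ := hq
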